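/- Let 1 < p < ∞ and let Y be a locally AMUC Banach space which has a normalized sequence with upper p-estimates. Then Y fails Lindenstrauss' property B. -/

import Mathlib

open Filter Topology

/-- The asymptotic midpoint modulus `δ̃_Y(y,t)`: the supremum, over all closed
finite-codimensional subspaces `E` of `Y`, of
`inf_{z ∈ S_E} max {‖y + t z‖, ‖y - t z‖} - 1`. -/
noncomputable def deltaTilde (Y : Type*) [NormedAddCommGroup Y] [NormedSpace ℝ Y]
    (y : Y) (t : ℝ) : ℝ :=
  sSup {r : ℝ | ∃ E : Submodule ℝ Y, IsClosed (E : Set Y) ∧ FiniteDimensional ℝ (Y ⧸ E) ∧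
    r = sInf {m : ℝ | ∃ z : Y, z ∈ E ∧ ‖z‖ = 1 ∧ m = max ‖y + t • z‖ ‖y - t • z‖} - 1}

/-- A Banach space `Y` is locally asymptotically midpoint uniformly convex (locally AMUC)
if `δ̃_Y(y,t) > 0` for every `y ∈ S_Y` and every `t > 0`. -/
def LocallyAMUC (Y : Type*) [NormedAddCommGroup Y] [NormedSpace ℝ Y] : Prop :=
  ∀ y : Y, ‖y‖ = 1 → ∀ t : ℝ, 0 < t → 0 < deltaTilde Y y t

/-- `(y n)` is a basic sequence: it is a Schauder basis of the closed linear span of its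
range, i.e. every element of that closed span has a unique representation as a norm
convergent series `∑ aₖ yₖ`. -/
def IsBasicSeq {Y : Type*} [NormedAddCommGroup Y] [NormedSpace ℝ Y] (y : ℕ → Y) : Prop :=
  ∀ x ∈ closure ((Submodule.span ℝ (Set.range y) : Submodule ℝ Y) : Set Y),
    ∃! a : ℕ → ℝ,
      Filter.Tendsto (fun n => ∑ k ∈ Finset.range n, a k • y k) Filter.atTop (nhds x)

/-- Two sequences are equivalent if a series `∑ aₖ yₖ` converges exactly when the
series `∑ aₖ zₖ` converges. -/
def SeqEquivalent {Y Z : Type*} [NormedAddCommGroup Y] [NormedSpace ℝ Y]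
    [NormedAddCommGroup Z] [NormedSpace ℝ Z] (y : ℕ → Y) (z : ℕ → Z) : Prop :=
  ∀ a : ℕ → ℝ,
    (∃ x : Y, Filter.Tendsto (fun n => ∑ k ∈ Finset.range n, a k • y k)
      Filter.atTop (nhds x)) ↔
    (∃ x : Z, Filter.Tendsto (fun n => ∑ k ∈ Finset.range n, a k • z k)
      Filter.atTop (nhds x))

/-- `(y n)` is a symmetric basic sequence: it is basic and every permutation of it is a
basic sequence equivalent to it. -/
def IsSymmetricBasicSeq {Y : Type*} [NormedAddCommGroup Y] [NormedSpace ℝ Y]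
    (y : ℕ → Y) : Prop :=
  IsBasicSeq y ∧ ∀ σ : Equiv.Perm ℕ, IsBasicSeq (y ∘ σ) ∧ SeqEquivalent (y ∘ σ) y

/-- `(y n)` is equivalent to the unit vector basis of `ℓ₁`: there is `c > 0` with
`‖∑ aₖ yₖ‖ ≥ c ∑ |aₖ|` for all finitely supported scalars. -/
def EquivL1UnitBasis {Y : Type*} [NormedAddCommGroup Y] [NormedSpace ℝ Y]
    (y : ℕ → Y) : Prop :=
  ∃ c : ℝ, 0 < c ∧ ∀ (n : ℕ) (a : ℕ → ℝ),
    c * ∑ k ∈ Finset.range n, |a k| ≤ ‖∑ k ∈ Finset.range n, a k • y k‖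

/-- A normalized sequence `(y n)` has upper `p`-estimates if there is `C > 0` with
`‖∑_{k=1}^n aₖ yₖ‖ ≤ C (∑_{k=1}^n |aₖ|^p)^(1/p)` for all `n` and all scalars. -/
def HasUpperPEstimates {Y : Type*} [NormedAddCommGroup Y] [NormedSpace ℝ Y]
    (p : ℝ) (y : ℕ → Y) : Prop :=
  ∃ C : ℝ, 0 < C ∧ ∀ (n : ℕ) (a : ℕ → ℝ),
    ‖∑ k ∈ Finset.range n, a k • y k‖ ≤
      C * (∑ k ∈ Finset.range n, |a k| ^ p) ^ (1 / p)

/-- The set of norm-attaining bounded linear operators from `X` to `Y`. -/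
def NormAttainingOps (X Y : Type*) [NormedAddCommGroup X] [NormedSpace ℝ X]
    [NormedAddCommGroup Y] [NormedSpace ℝ Y] : Set (X →L[ℝ] Y) :=
  {T | ∃ x : X, ‖x‖ ≤ 1 ∧ ‖T x‖ = ‖T‖}

/-- `Y` has Lindenstrauss' property B if, for every Banach space `X`, the norm-attaining
operators are dense (in operator norm) in the space of all bounded linear operators from
`X` to `Y`. -/
def PropertyB (Y : Type*) [NormedAddCommGroup Y] [NormedSpace ℝ Y] : Prop :=
  ∀ (X : Type) (_ : NormedAddCommGroup X), ∀ (_ : NormedSpace ℝ X) (_ : CompleteSpace X),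
    Dense (NormAttainingOps X Y)

/-!
Suppose that the unit ball of `X` is asymptotically flat along a weakly null sequence `(e n)`. If
`T : X →L[ℝ] Y` has norm one and attains it at `x`, then `T x ± δ • T (e n)` lies in the unit ball
of `Y` for some `δ > 0` and all large `n`. As `T (e n)` is weakly null, it is close to any given
closed finite-codimensional subspace, so local asymptotic midpoint uniform convexity at `T x` forces
`T (e n) → 0`. The operators with this property form a closed set; under property B it would contain
every `S : X →L[ℝ] Y`.

For `X` we take the completion of `c₀₀` under `‖a‖ = sup_A |∑ i ∈ A, a i| / w #A` with
`w k = k ^ α`, a variant of a space of Gowers. The `k`-th largest coefficient of a vector of norm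
one is at most `2 * w k / k`, so the coefficients are `p`-summable when `α < 1 - 1 / p`, and the
upper `p`-estimates provide a bounded `S` with `S (e n) = y n`.
-/

open scoped ENNReal Finset

section AsymptoticConvexity

variable {ι X Y : Type*} {l : Filter ι} [NormedAddCommGroup X] [NormedSpace ℝ X]
  [NormedAddCommGroup Y] [NormedSpace ℝ Y]

/-- Weak convergence to `0` of a family along a filter, tested against continuous functionals. -/
def IsWeaklyNull (l : Filter ι) (v : ι → X) : Prop :=
  ∀ f : X →L[ℝ] ℝ, Tendsto (fun i => f (v i)) l (𝓝 0)

/-- The unit ball is asymptotically flat along `e`: every point `x` of the ball, including the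
points of norm one, is the midpoint of the segment `[x - δ e_i, x + δ e_i]` contained in the ball
for some `δ > 0` and all `i` far enough along the filter. -/
def IsAsymptoticallyFlat (l : Filter ι) (e : ι → X) : Prop :=
  ∀ x : X, ‖x‖ ≤ 1 → ∃ δ : ℝ, 0 < δ ∧ ∀ᶠ i in l, ‖x + δ • e i‖ ≤ 1 ∧ ‖x - δ • e i‖ ≤ 1

lemma isClosed_setOf_tendsto_zero {L : ι → X →L[ℝ] Y} {K : ℝ} (hL : ∀ᶠ i in l, ‖L i‖ ≤ K) :
    IsClosed {x | Tendsto (fun i => L i x) l (𝓝 0)} := by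
  refine isClosed_of_closure_subset fun x hx => ?_
  rw [Set.mem_ofPred_eq, NormedAddGroup.tendsto_nhds_zero]
  intro ε hε
  have hK : 0 < |K| + 1 := by positivity
  obtain ⟨y, hy, hxy⟩ := Metric.mem_closure_iff.1 hx (ε / 2 / (|K| + 1)) (by positivity)
  rw [dist_eq_norm, lt_div_iff₀ hK] at hxy
  filter_upwards [hL, NormedAddGroup.tendsto_nhds_zero.1 hy (ε / 2) (half_pos hε)] with i hLi hyi
  have hdiff : ‖L i (x - y)‖ ≤ ‖x - y‖ * (|K| + 1) := by
    refine (L i).le_of_opNorm_le_of_le ?_ le_rfl |>.trans_eq (mul_comm _ _)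
    linarith [le_abs_self K]
  calc ‖L i x‖ = ‖L i (x - y) + L i y‖ := by rw [map_sub, sub_add_cancel]
    _ ≤ ‖L i (x - y)‖ + ‖L i y‖ := norm_add_le _ _
    _ < ε := by linarith

namespace IsWeaklyNull

lemma map {v : ι → X} (hv : IsWeaklyNull l v) (T : X →L[ℝ] Y) :
    IsWeaklyNull l fun i => T (v i) :=
  fun f => hv (f.comp T)

lemma tendsto_zero [FiniteDimensional ℝ X] {v : ι → X} (hv : IsWeaklyNull l v) :
    Tendsto v l (𝓝 0) := by
  let φ := (Module.finBasis ℝ X).equivFunL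
  have hcoord : Tendsto (fun i => φ (v i)) l (𝓝 0) :=
    tendsto_pi_nhds.2 fun j => hv.map φ.toContinuousLinearMap (.proj j)
  simpa [Function.comp_def] using (φ.symm.continuous.tendsto 0).comp hcoord

lemma eventually_exists_mem_norm_sub_lt {v : ι → X} (hv : IsWeaklyNull l v) {E : Submodule ℝ X}
    (hE : IsClosed (E : Set X)) [FiniteDimensional ℝ (X ⧸ E)] {ε : ℝ} (hε : 0 < ε) :
    ∀ᶠ i in l, ∃ z ∈ E, ‖v i - z‖ < ε := by
  have : IsClosed (E : Set X) := hE
  have hquot : Tendsto (fun i => E.mkQL (v i)) l (𝓝 0) := (hv.map E.mkQL).tendsto_zero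
  filter_upwards [NormedAddGroup.tendsto_nhds_zero.1 hquot ε hε] with i hi
  obtain ⟨u, hu, huε⟩ := (QuotientAddGroup.norm_lt_iff (S := E.toAddSubgroup)).1 hi
  exact ⟨v i - u, (Submodule.Quotient.eq E).1 hu.symm, by rwa [sub_sub_cancel]⟩

end IsWeaklyNull

lemma finite_setOf_le_apply_of_norm_sum_le {e : ι → X}
    (he : ∀ ε > 0, ∃ k > 0, ∀ A : Finset ι, #A = k → ‖∑ i ∈ A, e i‖ ≤ ε * k)
    (f : X →L[ℝ] ℝ) {ε : ℝ} (hε : 0 < ε) : {i | ε ≤ f (e i)}.Finite := by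
  by_contra hinf
  obtain ⟨k, hk, hsum⟩ := he (ε / (‖f‖ + 1)) (by positivity)
  obtain ⟨A, hA, hAk⟩ := Set.Infinite.exists_subset_card_eq hinf k
  have hlower : k * ε ≤ f (∑ i ∈ A, e i) := by
    rw [map_sum, ← hAk, ← nsmul_eq_mul]
    exact Finset.card_nsmul_le_sum _ _ _ fun i hi => hA hi
  have hupper : f (∑ i ∈ A, e i) ≤ ‖f‖ * (ε / (‖f‖ + 1) * k) :=
    (le_abs_self _).trans (f.le_opNorm_of_le (hsum A hAk))
  have hlt : ‖f‖ * (ε / (‖f‖ + 1) * k) < k * ε :=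
    calc ‖f‖ * (ε / (‖f‖ + 1) * k) = ‖f‖ / (‖f‖ + 1) * (k * ε) := by ring
      _ < 1 * (k * ε) := by
        gcongr
        exact (div_lt_one (by positivity)).2 (lt_add_one _)
      _ = k * ε := one_mul _
  linarith

lemma isWeaklyNull_cofinite_of_norm_sum_le {e : ι → X}
    (he : ∀ ε > 0, ∃ k > 0, ∀ A : Finset ι, #A = k → ‖∑ i ∈ A, e i‖ ≤ ε * k) :
    IsWeaklyNull cofinite e := by
  intro f
  rw [NormedAddGroup.tendsto_nhds_zero]
  intro ε hε
  filter_upwards [(finite_setOf_le_apply_of_norm_sum_le he f hε).eventually_cofinite_notMem,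
    (finite_setOf_le_apply_of_norm_sum_le he (-f) hε).eventually_cofinite_notMem] with i hpos hneg
  simp only [not_le, neg_apply] at hpos hneg
  exact abs_lt.2 ⟨by linarith, hpos⟩

lemma norm_add_smul_le_max {c : ℝ} (hc : |c| ≤ 1) (u z : Y) :
    ‖u + c • z‖ ≤ max ‖u + z‖ ‖u - z‖ := by
  obtain ⟨hc₁, hc₂⟩ := abs_le.1 hc
  refine convexOn_univ_norm.le_max_of_mem_segment (Set.mem_univ _) (Set.mem_univ _)
    ⟨(1 + c) / 2, (1 - c) / 2, by linarith, by linarith, by ring, by module⟩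

namespace LocallyAMUC

lemma exists_submodule_one_add_le_max (hY : LocallyAMUC Y) {u : Y} (hu : ‖u‖ = 1) {t : ℝ}
    (ht : 0 < t) : ∃ r > 0, ∃ E : Submodule ℝ Y, IsClosed (E : Set Y) ∧
      FiniteDimensional ℝ (Y ⧸ E) ∧ ∀ z ∈ E, t ≤ ‖z‖ → 1 + r ≤ max ‖u + z‖ ‖u - z‖ := by
  obtain ⟨r, ⟨E, hE, hfin, hr⟩, hr0⟩ := exists_lt_of_lt_csSup
    (by exact ⟨_, ⊤, isClosed_univ, inferInstance, rfl⟩) (hY u hu t ht)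
  refine ⟨r, hr0, E, hE, hfin, fun z hz htz => ?_⟩
  have hz0 : 0 < ‖z‖ := ht.trans_le htz
  have hunit : 1 + r ≤ max ‖u + t • ‖z‖⁻¹ • z‖ ‖u - t • ‖z‖⁻¹ • z‖ := by
    rw [hr, add_sub_cancel]
    have hnorm : ‖‖z‖⁻¹ • z‖ = 1 := norm_smul_inv_norm (𝕜 := ℝ) (norm_pos_iff.1 hz0)
    refine csInf_le ⟨0, ?_⟩ ⟨_, E.smul_mem _ hz, hnorm, rfl⟩
    rintro _ ⟨_, -, -, rfl⟩
    exact le_max_of_le_left (norm_nonneg _)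
  have hc : |t * ‖z‖⁻¹| ≤ 1 := by
    rw [abs_of_nonneg (by positivity), ← div_eq_mul_inv]
    exact (div_le_one hz0).2 htz
  rw [smul_smul] at hunit
  refine hunit.trans (max_le (norm_add_smul_le_max hc u z) ?_)
  rw [sub_eq_add_neg, ← neg_smul]
  exact norm_add_smul_le_max ((abs_neg _).trans_le hc) u z

lemma tendsto_zero_of_isWeaklyNull (hY : LocallyAMUC Y) {u : Y} (hu : ‖u‖ = 1) {v : ι → Y}
    (hv : IsWeaklyNull l v) (huv : ∀ᶠ i in l, ‖u + v i‖ ≤ 1 ∧ ‖u - v i‖ ≤ 1) :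
    Tendsto v l (𝓝 0) := by
  rw [NormedAddGroup.tendsto_nhds_zero]
  intro ε hε
  obtain ⟨r, hr, E, hE, hfin, hmax⟩ := hY.exists_submodule_one_add_le_max hu (half_pos hε)
  filter_upwards [huv, hv.eventually_exists_mem_norm_sub_lt hE (lt_min (half_pos hε) hr)]
    with i ⟨hplus, hminus⟩ ⟨z, hz, hzv⟩
  obtain ⟨hzε, hzr⟩ := lt_min_iff.1 hzv
  have hplus' : ‖u + z‖ < 1 + r :=
    calc ‖u + z‖ = ‖(u + v i) - (v i - z)‖ := by congr 1; abel
      _ ≤ ‖u + v i‖ + ‖v i - z‖ := norm_sub_le _ _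
      _ < 1 + r := add_lt_add_of_le_of_lt hplus hzr
  have hminus' : ‖u - z‖ < 1 + r :=
    calc ‖u - z‖ = ‖(u - v i) + (v i - z)‖ := by rw [sub_add_sub_cancel]
      _ ≤ ‖u - v i‖ + ‖v i - z‖ := norm_add_le _ _
      _ < 1 + r := add_lt_add_of_le_of_lt hminus hzr
  have hznorm : ‖z‖ < ε / 2 := by
    by_contra! hle
    exact (max_lt hplus' hminus').not_ge (hmax z hz hle)
  linarith [norm_le_norm_sub_add (v i) z]

lemma tendsto_zero_of_norm_apply_eq_one (hY : LocallyAMUC Y) {e : ι → X}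
    (hflat : IsAsymptoticallyFlat l e) (hnull : IsWeaklyNull l e) {T : X →L[ℝ] Y} (hT : ‖T‖ ≤ 1)
    {x : X} (hx : ‖x‖ ≤ 1) (hTx : ‖T x‖ = 1) : Tendsto (fun i => T (e i)) l (𝓝 0) := by
  obtain ⟨δ, hδ, hball⟩ := hflat x hx
  have hT_le {w : X} (hw : ‖w‖ ≤ 1) : ‖T w‖ ≤ 1 :=
    (T.le_of_opNorm_le_of_le hT hw).trans_eq (one_mul 1)
  have hδT : Tendsto (fun i => (δ • T) (e i)) l (𝓝 0) := by
    refine hY.tendsto_zero_of_isWeaklyNull hTx (hnull.map (δ • T)) ?_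
    filter_upwards [hball] with i hi
    rw [smul_apply, ← map_smul, ← map_add, ← map_sub]
    exact hi.imp hT_le hT_le
  simpa [smul_smul, hδ.ne'] using hδT.const_smul δ⁻¹

lemma tendsto_zero_of_mem_normAttainingOps (hY : LocallyAMUC Y) {e : ι → X}
    (hflat : IsAsymptoticallyFlat l e) (hnull : IsWeaklyNull l e) {T : X →L[ℝ] Y}
    (hT : T ∈ NormAttainingOps X Y) : Tendsto (fun i => T (e i)) l (𝓝 0) := by
  obtain rfl | hT0 := eq_or_ne T 0
  · simpa using tendsto_const_nhds
  obtain ⟨x, hx, hTx⟩ := hT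
  have hnorm : ‖T‖ ≠ 0 := norm_ne_zero_iff.2 hT0
  have hunit : ‖(‖T‖⁻¹ • T) x‖ = 1 := by
    rw [smul_apply, norm_smul, hTx, norm_inv, norm_norm, inv_mul_cancel₀ hnorm]
  have hscaled := hY.tendsto_zero_of_norm_apply_eq_one hflat hnull
    (norm_smul_inv_norm (𝕜 := ℝ) hT0).le hx hunit
  simpa [smul_smul, hnorm] using hscaled.const_smul ‖T‖

lemma tendsto_zero_of_dense_normAttainingOps (hY : LocallyAMUC Y) {e : ι → X}
    (hflat : IsAsymptoticallyFlat l e) (hnull : IsWeaklyNull l e)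
    (hdense : Dense (NormAttainingOps X Y)) (S : X →L[ℝ] Y) :
    Tendsto (fun i => S (e i)) l (𝓝 0) := by
  obtain ⟨δ, hδ, hball⟩ := hflat 0 (by simp)
  have hbdd : ∀ᶠ i in l, ‖ContinuousLinearMap.apply ℝ Y (e i)‖ ≤ δ⁻¹ := by
    filter_upwards [hball] with i ⟨hi, _⟩
    rw [zero_add, norm_smul, Real.norm_of_nonneg hδ.le, ← le_inv_mul_iff₀ hδ, mul_one] at hi
    refine ContinuousLinearMap.opNorm_le_bound _ (by positivity) fun T => ?_
    rw [mul_comm]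
    exact T.le_opNorm_of_le hi
  exact closure_minimal
    (fun _ hT => hY.tendsto_zero_of_mem_normAttainingOps hflat hnull hT)
    (isClosed_setOf_tendsto_zero hbdd) (hdense S)

end LocallyAMUC

end AsymptoticConvexity

section Sums

variable {ι : Type*} {a : ι → ℝ}

lemma sum_abs_le_two_mul_of_abs_sum_le {c : ℝ} {A : Finset ι}
    (h : ∀ B ⊆ A, |∑ i ∈ B, a i| ≤ c) : ∑ i ∈ A, |a i| ≤ 2 * c := by
  have hpos : ∑ i ∈ A with 0 ≤ a i, |a i| ≤ c := by
    rw [Finset.sum_congr rfl fun i hi => abs_of_nonneg (Finset.mem_filter.1 hi).2]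
    exact (le_abs_self _).trans (h _ (Finset.filter_subset _ _))
  have hneg : ∑ i ∈ A with ¬ 0 ≤ a i, |a i| ≤ c := by
    rw [Finset.sum_congr rfl fun i hi => abs_of_neg (not_le.1 (Finset.mem_filter.1 hi).2),
      Finset.sum_neg_distrib]
    exact (neg_le_abs _).trans (h _ (Finset.filter_subset _ _))
  rw [← Finset.sum_filter_add_sum_filter_not A (0 ≤ a ·)]
  linarith

-- Removing a smallest `|a i|` at each stage bounds the decreasing rearrangement: the `k`-th largest
-- `|a i|` is at most `v k / k`.
lemma sum_abs_rpow_le_sum_div_rpow {p : ℝ} (hp : 0 ≤ p) {v : ℕ → ℝ} (s : Finset ι)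
    (h : ∀ A ⊆ s, ∑ i ∈ A, |a i| ≤ v #A) :
    ∑ i ∈ s, |a i| ^ p ≤ ∑ k ∈ Finset.Icc 1 #s, (v k / k) ^ p := by
  classical
  induction hn : #s generalizing s with
  | zero => simp [Finset.card_eq_zero.1 hn]
  | succ n ih =>
    obtain ⟨i, hi, hmin⟩ := s.exists_min_image (|a ·|) (Finset.card_pos.1 (by lia))
    have herase := ih (s.erase i) (fun A hA => h A (hA.trans (s.erase_subset i)))
      (by rw [Finset.card_erase_of_mem hi, hn, Nat.add_sub_cancel])
    have hai : |a i| ≤ v (n + 1) / (n + 1 : ℕ) := by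
      rw [le_div_iff₀ (by positivity), mul_comm, ← hn, ← nsmul_eq_mul]
      exact (s.card_nsmul_le_sum _ _ hmin).trans (h s subset_rfl)
    rw [← s.sum_erase_add _ hi, Finset.sum_Icc_succ_top (by lia)]
    gcongr

end Sums

lemma exists_clm_apply_eq_of_norm_linearCombination_le {ι 𝕜 X Y : Type*}
    [NontriviallyNormedField 𝕜] [NormedAddCommGroup X] [NormedSpace 𝕜 X] [NormedAddCommGroup Y]
    [NormedSpace 𝕜 Y] [CompleteSpace Y] {e : ι → X} {y : ι → Y} {K : ℝ}
    (he : Dense (Submodule.span 𝕜 (Set.range e) : Set X))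
    (h : ∀ a : ι →₀ 𝕜,
      ‖Finsupp.linearCombination 𝕜 y a‖ ≤ K * ‖Finsupp.linearCombination 𝕜 e a‖) :
    ∃ S : X →L[𝕜] Y, ∀ i, S (e i) = y i := by
  have hrange : DenseRange (Finsupp.linearCombination 𝕜 e) := by
    rwa [DenseRange, ← LinearMap.coe_range, Finsupp.range_linearCombination]
  refine ⟨(Finsupp.linearCombination 𝕜 y).extendOfNorm (Finsupp.linearCombination 𝕜 e),
    fun i => ?_⟩
  simpa using LinearMap.extendOfNorm_eq hrange ⟨K, h⟩ (Finsupp.single i 1)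

lemma HasUpperPEstimates.exists_norm_linearCombination_le {Y : Type*} [NormedAddCommGroup Y]
    [NormedSpace ℝ Y] {p : ℝ} (hp : p ≠ 0) {y : ℕ → Y} (hy : HasUpperPEstimates p y) :
    ∃ C > 0, ∀ a : ℕ →₀ ℝ,
      ‖Finsupp.linearCombination ℝ y a‖ ≤ C * (∑ i ∈ a.support, |a i| ^ p) ^ (1 / p) := by
  obtain ⟨C, hC, hy⟩ := hy
  refine ⟨C, hC, fun a => ?_⟩
  obtain ⟨n, hn⟩ := Finset.exists_nat_subset_range a.support
  have hsum : ∑ i ∈ a.support, |a i| ^ p = ∑ i ∈ Finset.range n, |a i| ^ p :=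
    Finset.sum_subset hn fun i _ hi => by
      rw [Finsupp.notMem_support_iff.1 hi, abs_zero, Real.zero_rpow hp]
  rw [hsum, Finsupp.linearCombination_apply, Finsupp.sum_of_support_subset a hn _ (by simp)]
  exact hy n a

/-- A weight for the space `GowersWeight.space`: a sequence `0 = w 0 < 1 = w 1 < w 2 < ⋯` tending
to infinity, of which `w k` bounds the sums of `k` coefficients of vectors of the unit ball. -/
structure GowersWeight where
  toFun : ℕ → ℝ
  map_zero : toFun 0 = 0
  map_one : toFun 1 = 1
  strictMono : StrictMono toFun
  tendsto_atTop : Tendsto toFun atTop atTop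

/-- The bounded real functions on the finite subsets of `ℕ`, with the supremum norm. -/
abbrev BddFinsetFun : Type := lp (fun _ : Finset ℕ => ℝ) ∞

namespace GowersWeight

instance : CoeFun GowersWeight fun _ => ℕ → ℝ := ⟨toFun⟩

/-- The weight `k ↦ k ^ α`. -/
noncomputable def rpow (α : ℝ) (hα : 0 < α) : GowersWeight where
  toFun k := (k : ℝ) ^ α
  map_zero := by rw [Nat.cast_zero, Real.zero_rpow hα.ne']
  map_one := by rw [Nat.cast_one, Real.one_rpow]
  strictMono _ _ h := Real.rpow_lt_rpow (Nat.cast_nonneg _) (Nat.cast_lt.2 h) hα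
  tendsto_atTop := (tendsto_rpow_atTop hα).comp tendsto_natCast_atTop_atTop

lemma summable_rpow_div_rpow {α p : ℝ} (hα : 0 < α) (hp : 1 < (1 - α) * p) :
    Summable fun k : ℕ => (rpow α hα k / k) ^ p := by
  refine (Real.summable_nat_rpow.2 (show (α - 1) * p < -1 by linarith)).congr_atTop ?_
  filter_upwards [eventually_gt_atTop 0] with k hk
  have hk' : (0 : ℝ) < k := Nat.cast_pos.2 hk
  rw [Real.rpow_mul hk'.le, Real.rpow_sub_one hk'.ne']
  rfl

variable (w : GowersWeight)

lemma nonneg (k : ℕ) : 0 ≤ w k :=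
  w.map_zero.symm.trans_le (w.strictMono.monotone k.zero_le)

lemma one_le {k : ℕ} (hk : 1 ≤ k) : 1 ≤ w k :=
  w.map_one.symm.trans_le (w.strictMono.monotone hk)

lemma inv_le_one (k : ℕ) : (w k)⁻¹ ≤ 1 := by
  rcases k.eq_zero_or_pos with rfl | hk
  · simp [w.map_zero]
  · exact inv_le_one_of_one_le₀ (w.one_le hk)

lemma exists_pos_forall_add_le_succ (N : ℕ) : ∃ η > 0, ∀ k < N, w k + η ≤ w (k + 1) := by
  have hgap : ∀ᶠ η in 𝓝[>] (0 : ℝ), ∀ k ∈ Finset.range N, η ≤ w (k + 1) - w k :=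
    (Finset.eventually_all _).2 fun k _ => nhdsWithin_le_nhds
      (ge_mem_nhds (sub_pos.2 (w.strictMono k.lt_succ_self)))
  obtain ⟨η, hη, hpos⟩ := (hgap.and self_mem_nhdsWithin).exists
  exact ⟨η, hpos, fun k hk => by linarith [hη k (Finset.mem_range.2 hk)]⟩

/-- The `n`-th basis vector, as an element of `BddFinsetFun`. -/
noncomputable def ambientVec (n : ℕ) : BddFinsetFun :=
  ⟨fun A => if n ∈ A then (w #A)⁻¹ else 0, by
    refine memℓp_infty ⟨1, ?_⟩
    rintro _ ⟨A, rfl⟩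
    have hinv : |(w #A)⁻¹| ≤ 1 := by
      rw [abs_of_nonneg (inv_nonneg.2 (w.nonneg _))]
      exact w.inv_le_one _
    dsimp only
    split_ifs
    exacts [hinv, by simp]⟩

/-- The completion of `c₀₀` for the norm `‖a‖ = sup_A |∑ i ∈ A, a i| / w #A`, realised inside
`BddFinsetFun` by sending `a` to the function `A ↦ (∑ i ∈ A, a i) / w #A`; since `w 1 = 1`, the
coefficients of `x` are its values at singletons. The value at `∅` is `0 / 0 = 0`. -/
noncomputable def space : Submodule ℝ BddFinsetFun :=
  (Submodule.span ℝ (Set.range w.ambientVec)).topologicalClosure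

instance : CompleteSpace w.space :=
  (Submodule.isClosed_topologicalClosure _).completeSpace_coe

/-- The `n`-th vector of the unit vector basis of `GowersWeight.space`. -/
noncomputable def basisVec (n : ℕ) : w.space :=
  ⟨w.ambientVec n, Submodule.le_topologicalClosure _ (Submodule.subset_span ⟨n, rfl⟩)⟩

lemma basisVec_apply (n : ℕ) (A : Finset ℕ) :
    (w.basisVec n).1 A = if n ∈ A then (w #A)⁻¹ else 0 :=
  rfl

variable {w}

lemma abs_apply_le_norm (x : w.space) (A : Finset ℕ) : |x.1 A| ≤ ‖x‖ :=
  lp.norm_apply_le_norm ENNReal.top_ne_zero x.1 A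

lemma norm_le_of_forall_abs_apply_le {x : w.space} {c : ℝ} (hc : 0 ≤ c)
    (h : ∀ A, |x.1 A| ≤ c) : ‖x‖ ≤ c :=
  lp.norm_le_of_forall_le hc h

lemma dense_span_basisVec :
    Dense (Submodule.span ℝ (Set.range w.basisVec) : Set w.space) := by
  have himage : Subtype.val '' (Submodule.span ℝ (Set.range w.basisVec) : Set w.space) =
      Submodule.span ℝ (Set.range w.ambientVec) := by
    rw [← Submodule.coe_subtype, ← Submodule.map_coe, Submodule.map_span, ← Set.range_comp]
    rfl
  rw [Subtype.dense_iff]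
  exact fun _ hx => (congrArg closure himage).ge hx

lemma mem_of_forall_basisVec_mem {V : Submodule ℝ w.space} (hV : IsClosed (V : Set w.space))
    (h : ∀ n, w.basisVec n ∈ V) (x : w.space) : x ∈ V :=
  closure_minimal (Submodule.span_le.2 (Set.range_subset_iff.2 h)) hV (dense_span_basisVec x)

/-- The evaluation `x ↦ x A` as a continuous functional on `GowersWeight.space`. -/
noncomputable def evalCLM (A : Finset ℕ) : w.space →L[ℝ] ℝ :=
  (lp.evalCLM ℝ (fun _ : Finset ℕ => ℝ) ∞ A).comp w.space.subtypeL

lemma evalCLM_apply (A : Finset ℕ) (x : w.space) : evalCLM A x = x.1 A :=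
  rfl

lemma norm_evalCLM_le (A : Finset ℕ) : ‖(evalCLM A : w.space →L[ℝ] ℝ)‖ ≤ 1 :=
  ContinuousLinearMap.opNorm_le_bound _ zero_le_one fun x =>
    (abs_apply_le_norm x A).trans_eq (one_mul _).symm

lemma mul_apply_eq_sum_singleton (x : w.space) (A : Finset ℕ) :
    w #A * x.1 A = ∑ i ∈ A, x.1 {i} := by
  let φ : w.space →L[ℝ] ℝ := w #A • evalCLM A - ∑ i ∈ A, evalCLM {i}
  have hφ (z : w.space) : φ z = w #A * z.1 A - ∑ i ∈ A, z.1 {i} := by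
    simp [φ, evalCLM_apply]
  have hker : x ∈ φ.ker := by
    refine mem_of_forall_basisVec_mem φ.isClosed_ker (fun n => ?_) x
    simp only [LinearMap.mem_ker, ContinuousLinearMap.coe_coe, hφ, basisVec_apply,
      Finset.mem_singleton, Finset.card_singleton, w.map_one, inv_one, Finset.sum_ite_eq]
    split_ifs with hn
    · rw [mul_inv_cancel₀ (by linarith [w.one_le (Finset.card_pos.2 ⟨n, hn⟩)]), sub_self]
    · simp
  exact sub_eq_zero.1 ((hφ x).symm.trans hker)

lemma mul_apply_eq_mul_erase_add (x : w.space) {A : Finset ℕ} {m : ℕ} (hm : m ∈ A) :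
    w #A * x.1 A = w #(A.erase m) * x.1 (A.erase m) + x.1 {m} := by
  rw [mul_apply_eq_sum_singleton, mul_apply_eq_sum_singleton, Finset.sum_erase_add _ _ hm]

lemma tendsto_apply_zero_of_basisVec {l : Filter (Finset ℕ)}
    (h : ∀ n, Tendsto (w.basisVec n).1 l (𝓝 0)) (x : w.space) : Tendsto x.1 l (𝓝 0) := by
  let V : Submodule ℝ w.space :=
    { carrier := {z | Tendsto (fun A => evalCLM A z) l (𝓝 0)}
      zero_mem' := by simpa using tendsto_const_nhds
      add_mem' := fun hx hz => by simpa using Tendsto.add hx hz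
      smul_mem' := fun c z hz => by simpa using Tendsto.const_mul c hz }
  have hV : IsClosed (V : Set w.space) :=
    isClosed_setOf_tendsto_zero (.of_forall norm_evalCLM_le)
  exact mem_of_forall_basisVec_mem hV h x

lemma tendsto_apply_singleton (x : w.space) : Tendsto (fun n => x.1 {n}) atTop (𝓝 0) := by
  refine tendsto_apply_zero_of_basisVec (l := map ({·}) atTop) (fun n => ?_) x
  refine tendsto_map'_iff.2 (tendsto_const_nhds.congr' ?_)
  filter_upwards [eventually_gt_atTop n] with m hm
  simp [basisVec_apply, hm.ne]

lemma exists_forall_card_ge_abs_apply_le (x : w.space) {ε : ℝ} (hε : 0 < ε) :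
    ∃ N, ∀ A : Finset ℕ, N ≤ #A → |x.1 A| ≤ ε := by
  have hinv : Tendsto (fun A : Finset ℕ => (w #A)⁻¹) (comap Finset.card atTop) (𝓝 0) :=
    (tendsto_inv_atTop_zero.comp w.tendsto_atTop).comp tendsto_comap
  have hx : Tendsto x.1 (comap Finset.card atTop) (𝓝 0) := by
    refine tendsto_apply_zero_of_basisVec (fun n => ?_) x
    refine squeeze_zero_norm (fun A => ?_) hinv
    rw [basisVec_apply, Real.norm_eq_abs]
    split_ifs
    · exact (abs_of_nonneg (inv_nonneg.2 (w.nonneg _))).le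
    · simpa using w.nonneg _
  have hev := NormedAddGroup.tendsto_nhds_zero.1 hx ε hε
  obtain ⟨N, hN⟩ := eventually_atTop.1 (eventually_comap.1 hev)
  exact ⟨N, fun A hA => (hN _ hA A rfl).le⟩

lemma add_smul_basisVec_apply (x : w.space) (s : ℝ) (m : ℕ) (A : Finset ℕ) :
    (x + s • w.basisVec m).1 A = x.1 A + if m ∈ A then s * (w #A)⁻¹ else 0 := by
  change x.1 A + s * (w.basisVec m).1 A = _
  rw [basisVec_apply, mul_ite, mul_zero]

lemma abs_add_smul_basisVec_apply_le (x : w.space) (s : ℝ) (m : ℕ) (A : Finset ℕ) :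
    |(x + s • w.basisVec m).1 A| ≤ |x.1 A| + |s| := by
  rw [add_smul_basisVec_apply]
  refine (abs_add_le _ _).trans (add_le_add_right ?_ _)
  split_ifs
  · rw [abs_mul, abs_of_nonneg (inv_nonneg.2 (w.nonneg _))]
    exact mul_le_of_le_one_right (abs_nonneg s) (w.inv_le_one _)
  · simp

lemma abs_add_smul_basisVec_apply_le_one {x : w.space} (hx : ‖x‖ ≤ 1) {s : ℝ} {m : ℕ}
    {A : Finset ℕ} (hm : m ∈ A) (hgap : w #(A.erase m) + (|x.1 {m}| + |s|) ≤ w #A) :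
    |(x + s • w.basisVec m).1 A| ≤ 1 := by
  set z := x + s • w.basisVec m
  have herase : z.1 (A.erase m) = x.1 (A.erase m) := by
    rw [add_smul_basisVec_apply, if_neg (Finset.notMem_erase m A), add_zero]
  have hw : 0 < w #A := zero_lt_one.trans_le (w.one_le (Finset.card_pos.2 ⟨m, hm⟩))
  refine le_of_mul_le_mul_left ?_ hw
  calc w #A * |z.1 A| = |w #A * z.1 A| := by rw [abs_mul, abs_of_pos hw]
    _ = |w #(A.erase m) * x.1 (A.erase m) + z.1 {m}| := by
        rw [mul_apply_eq_mul_erase_add z hm, herase]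
    _ ≤ w #(A.erase m) * |x.1 (A.erase m)| + |z.1 {m}| := by
        refine (abs_add_le _ _).trans_eq ?_
        rw [abs_mul, abs_of_nonneg (w.nonneg _)]
    _ ≤ w #(A.erase m) * 1 + (|x.1 {m}| + |s|) :=
        add_le_add
          (mul_le_mul_of_nonneg_left ((abs_apply_le_norm x _).trans hx) (w.nonneg _))
          (abs_add_smul_basisVec_apply_le x s m {m})
    _ ≤ w #A * 1 := by rwa [mul_one, mul_one]

-- On large `A` the values of `x` are at most `1 / 2`, so a perturbation by at most `1 / 2` is
-- harmless; on the remaining `A`, adjoining a far away `m` to `A.erase m` increases the weight by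
-- a fixed amount, which leaves room for the coefficient at `m`.
lemma isAsymptoticallyFlat_basisVec (w : GowersWeight) :
    IsAsymptoticallyFlat atTop w.basisVec := by
  intro x hx
  obtain ⟨N, hN⟩ := exists_forall_card_ge_abs_apply_le x one_half_pos
  obtain ⟨η, hη, hgap⟩ := w.exists_pos_forall_add_le_succ N
  have hball {m : ℕ} (hm : |x.1 {m}| < η / 2) {s : ℝ} (hs : |s| ≤ min (η / 2) (1 / 2)) :
      ‖x + s • w.basisVec m‖ ≤ 1 := by
    obtain ⟨hsη, hs2⟩ := le_min_iff.1 hs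
    refine norm_le_of_forall_abs_apply_le zero_le_one fun A => ?_
    by_cases hmA : m ∈ A
    · rcases le_or_gt N #A with hA | hA
      · linarith [abs_add_smul_basisVec_apply_le x s m A, hN A hA]
      · have hcard := Finset.card_erase_add_one hmA
        have hstep := hgap #(A.erase m) (by lia)
        rw [hcard] at hstep
        exact abs_add_smul_basisVec_apply_le_one hx hmA (by linarith)
    · rw [add_smul_basisVec_apply, if_neg hmA, add_zero]
      exact (abs_apply_le_norm x A).trans hx
  have hδ : 0 < min (η / 2) (1 / 2) := by positivity
  refine ⟨_, hδ, ?_⟩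
  filter_upwards [NormedAddGroup.tendsto_nhds_zero.1 (tendsto_apply_singleton x) _ (half_pos hη)]
    with m hm
  rw [sub_eq_add_neg, ← neg_smul]
  exact ⟨hball hm (abs_of_pos hδ).le, hball hm (by rw [abs_neg, abs_of_pos hδ])⟩

lemma sum_basisVec_apply (A B : Finset ℕ) :
    (∑ i ∈ A, w.basisVec i).1 B = #(A ∩ B) * (w #B)⁻¹ := by
  rw [← evalCLM_apply, map_sum]
  simp only [evalCLM_apply, basisVec_apply]
  rw [← Finset.sum_filter, Finset.sum_const, nsmul_eq_mul, Finset.filter_mem_eq_inter]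

lemma norm_sum_basisVec_le (A : Finset ℕ) {K : ℕ} (hK : 1 ≤ K) :
    ‖∑ i ∈ A, w.basisVec i‖ ≤ K + #A * (w K)⁻¹ := by
  have hwK : 0 < w K := zero_lt_one.trans_le (w.one_le hK)
  refine norm_le_of_forall_abs_apply_le (by positivity) fun B => ?_
  have hinvB : 0 ≤ (w #B)⁻¹ := inv_nonneg.2 (w.nonneg _)
  rw [sum_basisVec_apply, abs_of_nonneg (by positivity)]
  rcases le_total #B K with hB | hB
  · calc (#(A ∩ B) : ℝ) * (w #B)⁻¹ ≤ K * 1 := by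
          gcongr
          exacts [(Finset.card_le_card Finset.inter_subset_right).trans hB, w.inv_le_one _]
      _ ≤ K + #A * (w K)⁻¹ := by rw [mul_one]; exact le_add_of_nonneg_right (by positivity)
  · calc (#(A ∩ B) : ℝ) * (w #B)⁻¹ ≤ #A * (w K)⁻¹ := by
          gcongr
          exacts [Finset.inter_subset_left, w.strictMono.monotone hB]
      _ ≤ K + #A * (w K)⁻¹ := le_add_of_nonneg_left (Nat.cast_nonneg K)

lemma isWeaklyNull_basisVec (w : GowersWeight) : IsWeaklyNull atTop w.basisVec := by
  rw [← Nat.cofinite_eq_atTop]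
  refine isWeaklyNull_cofinite_of_norm_sum_le fun ε hε => ?_
  obtain ⟨K, hKε, hK⟩ := ((w.tendsto_atTop.eventually_ge_atTop (2 / ε)).and
    (eventually_ge_atTop 1)).exists
  obtain ⟨k, hk, hk0⟩ := ((tendsto_natCast_atTop_atTop.eventually_ge_atTop (K / (ε / 2))).and
    (eventually_gt_atTop 0)).exists
  refine ⟨k, hk0, fun A hA => ?_⟩
  have hinv : (w K)⁻¹ ≤ ε / 2 := by
    rw [← inv_div]
    exact inv_anti₀ (by positivity) hKε
  rw [div_le_iff₀ (half_pos hε)] at hk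
  calc ‖∑ i ∈ A, w.basisVec i‖ ≤ K + #A * (w K)⁻¹ := norm_sum_basisVec_le A hK
    _ ≤ k * (ε / 2) + k * (ε / 2) := by rw [hA]; gcongr
    _ = ε * k := by ring

lemma sum_abs_apply_singleton_le (x : w.space) (A : Finset ℕ) :
    ∑ i ∈ A, |x.1 {i}| ≤ 2 * ‖x‖ * w #A := by
  rw [mul_assoc]
  refine sum_abs_le_two_mul_of_abs_sum_le fun B hB => ?_
  rw [← mul_apply_eq_sum_singleton, abs_mul, abs_of_nonneg (w.nonneg _), mul_comm]
  exact mul_le_mul (abs_apply_le_norm x B) (w.strictMono.monotone (Finset.card_le_card hB))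
    (w.nonneg _) (norm_nonneg x)

lemma sum_abs_apply_singleton_rpow_le {p : ℝ} (hp : 0 ≤ p)
    (hw : Summable fun k : ℕ => (w k / k) ^ p) (x : w.space) (s : Finset ℕ) :
    ∑ i ∈ s, |x.1 {i}| ^ p ≤ (2 * ‖x‖) ^ p * ∑' k : ℕ, (w k / k) ^ p := by
  have hterm (k : ℕ) : 0 ≤ w k / k := div_nonneg (w.nonneg k) k.cast_nonneg
  calc ∑ i ∈ s, |x.1 {i}| ^ p
      ≤ ∑ k ∈ Finset.Icc 1 #s, (2 * ‖x‖ * w k / k) ^ p :=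
        sum_abs_rpow_le_sum_div_rpow hp s fun A _ => sum_abs_apply_singleton_le x A
    _ = (2 * ‖x‖) ^ p * ∑ k ∈ Finset.Icc 1 #s, (w k / k) ^ p := by
        simp only [mul_div_assoc, Real.mul_rpow (by positivity : 0 ≤ 2 * ‖x‖) (hterm _),
          Finset.mul_sum]
    _ ≤ (2 * ‖x‖) ^ p * ∑' k : ℕ, (w k / k) ^ p := by
        gcongr
        exact hw.sum_le_tsum _ fun k _ => Real.rpow_nonneg (hterm k) p

lemma linearCombination_basisVec_apply_singleton (a : ℕ →₀ ℝ) (i : ℕ) :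
    (Finsupp.linearCombination ℝ w.basisVec a).1 {i} = a i := by
  rw [← evalCLM_apply, Finsupp.linearCombination_apply, Finsupp.sum, map_sum]
  simp [evalCLM_apply, basisVec_apply, w.map_one, @eq_comm ℝ 0]

lemma exists_clm_basisVec_eq {Y : Type*} [NormedAddCommGroup Y] [NormedSpace ℝ Y]
    [CompleteSpace Y] {p : ℝ} (hp : 0 < p) (hw : Summable fun k : ℕ => (w k / k) ^ p)
    {y : ℕ → Y} (hy : HasUpperPEstimates p y) :
    ∃ S : w.space →L[ℝ] Y, ∀ n, S (w.basisVec n) = y n := by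
  obtain ⟨C, hC, hy⟩ := hy.exists_norm_linearCombination_le hp.ne'
  set D := ∑' k : ℕ, (w k / k) ^ p
  have hD : 0 ≤ D :=
    tsum_nonneg fun k => Real.rpow_nonneg (div_nonneg (w.nonneg k) k.cast_nonneg) p
  refine exists_clm_apply_eq_of_norm_linearCombination_le (K := C * (2 * D ^ (1 / p)))
    dense_span_basisVec fun a => (hy a).trans ?_
  set x := Finsupp.linearCombination ℝ w.basisVec a with hx
  have hsum : ∑ i ∈ a.support, |a i| ^ p ≤ (2 * ‖x‖) ^ p * D := by
    simpa only [hx, linearCombination_basisVec_apply_singleton] using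
      sum_abs_apply_singleton_rpow_le hp.le hw x a.support
  calc C * (∑ i ∈ a.support, |a i| ^ p) ^ (1 / p)
      ≤ C * ((2 * ‖x‖) ^ p * D) ^ (1 / p) := by gcongr
    _ = C * (2 * ‖x‖ * D ^ (1 / p)) := by
        rw [Real.mul_rpow (by positivity) hD, one_div, Real.rpow_rpow_inv (by positivity) hp.ne']
    _ = C * (2 * D ^ (1 / p)) * ‖x‖ := by ring

end GowersWeight

theorem locallyAMUC_upper_p_fails_propertyB_general {Y : Type*} [NormedAddCommGroup Y]
    [NormedSpace ℝ Y] [CompleteSpace Y] (hY : LocallyAMUC Y) {p : ℝ} (hp : 1 < p)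
    {y : ℕ → Y} (hy : ¬ Tendsto y atTop (𝓝 0)) (hup : HasUpperPEstimates p y) :
    ¬ PropertyB Y := by
  intro hB
  have hp0 : 0 < p := zero_lt_one.trans hp
  -- Any `0 < α < 1 - 1 / p` makes `∑ (k ^ α / k) ^ p` converge.
  have hα : 0 < (1 - 1 / p) / 2 := half_pos (sub_pos.2 ((div_lt_one hp0).2 hp))
  have hαp : 1 < (1 - (1 - 1 / p) / 2) * p := by
    have : (1 - (1 - 1 / p) / 2) * p = (p + 1) / 2 := by field_simp; ring
    linarith
  let w := GowersWeight.rpow _ hα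
  obtain ⟨S, hS⟩ :=
    GowersWeight.exists_clm_basisVec_eq hp0 (GowersWeight.summable_rpow_div_rpow hα hαp) hup
  have hSe := hY.tendsto_zero_of_dense_normAttainingOps w.isAsymptoticallyFlat_basisVec
    w.isWeaklyNull_basisVec (hB w.space _ _ inferInstance) S
  exact hy (hSe.congr hS)

/-- a locally AMUC Banach space having a normalized sequence with upper
`p`-estimates for some `1 < p < ∞` fails Lindenstrauss' property B. -/
theorem locallyAMUC_upper_p_fails_propertyB (Y : Type) [NormedAddCommGroup Y]
    [NormedSpace ℝ Y] [CompleteSpace Y] (hY : LocallyAMUC Y)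
    (p : ℝ) (hp : 1 < p)
    (y : ℕ → Y) (hnorm : ∀ n, ‖y n‖ = 1) (hup : HasUpperPEstimates p y) :
    ¬ PropertyB Y := by
  refine locallyAMUC_upper_p_fails_propertyB_general hY hp (fun hy => ?_) hup
  simpa [hnorm] using hy.norm
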